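/- Let m ≥ 5 be an odd integer, n = 3(2^m − 1), and let β be a primitive n-th root of unity in F_{2^{2m}}. Then the cyclic code of length 2n over F_2 with generator polynomial (x−1)^2 m_β(x)^2 m_{β^3}(x) m_{β^5}(x) has dimension 6(2^m − 1) − 7m − 2 and minimum distance exactly 8. -/

import Mathlib

open Polynomial

/-- The cyclic code of length `N` over the field `F` generated by the polynomial `g`.
Codewords are identified with the representatives of degree `< N` of the elements of the
ideal generated by `g` in `F[x]/(x^N - 1)`; equivalently, a polynomial `c` of degree `< N`
is a codeword iff `c ∈ (g, x^N - 1)` as an ideal of `F[x]`. -/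
noncomputable def cyclicCode (F : Type*) [Field F] (N : ℕ) (g : Polynomial F) :
    Submodule F (Polynomial F) :=
  Polynomial.degreeLT F N ⊓
    Submodule.restrictScalars F (Ideal.span ({g, Polynomial.X ^ N - 1} : Set (Polynomial F)))

/-- The minimum distance (equivalently, the minimum Hamming weight of a nonzero codeword,
a codeword being identified with its coefficient vector) of a linear code of polynomials. -/
noncomputable def minDist {F : Type*} [Field F] (C : Submodule F (Polynomial F)) : ℕ :=
  sInf {w | ∃ c ∈ C, c ≠ 0 ∧ c.support.card = w}

/-!
Let `g` be the generator polynomial and let `c` be a nonzero codeword. As `((x - 1) m_β)²` divides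
`c`, the polynomial `(x - 1) m_β` divides `x c'`, which in characteristic two is the odd part of
`c`, and hence also divides the even part. Exponents of equal parity below `2n` are separated by the
powers of `β` because `n` is odd, so the BCH bound applies to each part. If both parts are nonzero,
the zeros `1, β, β²` give each of them weight at least `4`. If one part vanishes, the other one is
`c` itself and has the zeros `1, β, …, β⁶`, hence weight at least `8`.

Conversely, `θ = β³` generates the multiplicative group of `𝔽_{2^m}`, so `1 + θ + θ² = θᵏ` for some
`k`, and `a = 1 + x³ + x⁶ + x³ᵏ` is a multiple of `(x - 1) m_β` of degree less than `n`. The four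
distinct irreducible factors of `g` divide `x ^ n - 1`, so `g` divides `a (x ^ n - 1)`, which has
weight `8`.
-/

section Codes

variable {F : Type*} [Field F] {N : ℕ} {g : F[X]}

theorem mem_cyclicCode_iff (hg : g ∣ X ^ N - 1) {c : F[X]} :
    c ∈ cyclicCode F N g ↔ c.degree < N ∧ g ∣ c := by
  have hspan : Ideal.span ({g, X ^ N - 1} : Set F[X]) = Ideal.span {g} := by
    rw [Ideal.span_insert, sup_eq_left]
    exact Ideal.span_singleton_le_span_singleton.mpr hg
  rw [cyclicCode, hspan, Submodule.mem_inf, mem_degreeLT, Submodule.restrictScalars_mem,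
    Ideal.mem_span_singleton]

theorem cyclicCode_eq_map_mulLeft (hg : g ∣ X ^ N - 1) (hg0 : g ≠ 0) :
    cyclicCode F N g = (degreeLT F (N - g.natDegree)).map (LinearMap.mulLeft F g) := by
  have degree_mul_lt_iff (r : F[X]) : (g * r).degree < N ↔ r.degree < (N - g.natDegree : ℕ) := by
    rcases eq_or_ne r 0 with rfl | hr
    · simp
    rw [degree_eq_natDegree hr, degree_eq_natDegree (mul_ne_zero hg0 hr), natDegree_mul hg0 hr,
      Nat.cast_lt, Nat.cast_lt, Nat.lt_sub_iff_add_lt']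
  ext c
  rw [mem_cyclicCode_iff hg, Submodule.mem_map]
  constructor
  · rintro ⟨hdeg, r, rfl⟩
    exact ⟨r, mem_degreeLT.mpr ((degree_mul_lt_iff r).mp hdeg), rfl⟩
  · rintro ⟨r, hr, rfl⟩
    exact ⟨(degree_mul_lt_iff r).mpr (mem_degreeLT.mp hr), dvd_mul_right g r⟩

theorem finrank_cyclicCode (hg : g ∣ X ^ N - 1) (hg0 : g ≠ 0) :
    Module.finrank F (cyclicCode F N g) = N - g.natDegree := by
  have hinj : Function.Injective (LinearMap.mulLeft F g) := mul_right_injective₀ hg0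
  rw [cyclicCode_eq_map_mulLeft hg hg0, ← (Submodule.equivMapOfInjective _ hinj _).finrank_eq,
    (degreeLTEquiv F _).finrank_eq, Module.finrank_fin_fun]

end Codes

section Support

/-- The BCH bound for a code with zeros `β ^ 0, …, β ^ (d - 1)`: the locators `β ^ i` of a codeword
of weight at most `d` would form a singular Vandermonde matrix. -/
theorem lt_card_support_of_aeval_pow_eq_zero {F K : Type*} [Field F] [Field K] [Algebra F K]
    {c : F[X]} (hc : c ≠ 0) {β : K} (hinj : Set.InjOn (β ^ ·) (c.support : Set ℕ)) {d : ℕ}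
    (hroot : ∀ j < d, aeval (β ^ j) c = 0) : d < c.support.card := by
  by_contra! hle
  let e := c.support.equivFin.symm
  have hlocators : Function.Injective fun k ↦ β ^ (e k : ℕ) := fun k l h ↦
    e.injective (Subtype.ext (hinj (e k).2 (e l).2 h))
  have hsum (j : Fin c.support.card) :
      ∑ k, algebraMap F K (c.coeff (e k)) * (β ^ (e k : ℕ)) ^ (j : ℕ) = 0 := by
    rw [e.sum_comp fun i ↦ algebraMap F K (c.coeff i) * (β ^ (i : ℕ)) ^ (j : ℕ),
      Finset.sum_coe_sort c.support fun i ↦ algebraMap F K (c.coeff i) * (β ^ i) ^ (j : ℕ),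
      ← hroot j (j.2.trans_le hle), aeval_def, eval₂_eq_sum, Polynomial.sum]
    exact Finset.sum_congr rfl fun i _ ↦ by rw [pow_right_comm]
  have hzero := Matrix.eq_zero_of_forall_pow_sum_mul_pow_eq_zero hlocators hsum
  obtain ⟨i, hi⟩ := support_nonempty.mpr hc
  have hcoeff := congrFun hzero (e.symm ⟨i, hi⟩)
  simp only [Equiv.apply_symm_apply, Pi.zero_apply, map_eq_zero] at hcoeff
  exact mem_support_iff.mp hi hcoeff

theorem support_sum_X_pow {R : Type*} [Semiring R] [Nontrivial R] (s : Finset ℕ) :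
    (∑ i ∈ s, (X : R[X]) ^ i).support = s := by
  ext j
  simp [coeff_X_pow]

theorem card_support_expand {R : Type*} [CommSemiring R] {p : ℕ} (hp : 0 < p) (f : R[X]) :
    (expand R p f).support.card = f.support.card := by
  have himage : (expand R p f).support = f.support.image (· * p) := by
    ext i
    simp only [mem_support_iff, coeff_expand hp, Finset.mem_image]
    constructor
    · intro h
      obtain ⟨hdvd, hi⟩ := ite_ne_right_iff.mp h
      exact ⟨i / p, hi, Nat.div_mul_cancel hdvd⟩
    · rintro ⟨j, hj, rfl⟩
      simpa [hp] using hj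
  rw [himage, Finset.card_image_of_injective _ (mul_left_injective₀ hp.ne')]

theorem card_support_mul_X_pow_sub_one {R : Type*} [Ring R] {a : R[X]} {n : ℕ}
    (ha : a.natDegree < n) : (a * (X ^ n - 1)).support.card = 2 * a.support.card := by
  have hcoeff (j : ℕ) :
      (a * (X ^ n - 1)).coeff j = if n ≤ j then a.coeff (j - n) else -a.coeff j := by
    rw [mul_sub, mul_one, coeff_sub, coeff_mul_X_pow']
    split_ifs with hj
    · rw [coeff_eq_zero_of_natDegree_lt (ha.trans_le hj), sub_zero]
    · rw [zero_sub]
  have hlt {i : ℕ} (hi : i ∈ a.support) : i < n := (le_natDegree_of_mem_supp i hi).trans_lt ha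
  have hunion : (a * (X ^ n - 1)).support = a.support ∪ a.support.map (addRightEmbedding n) := by
    ext j
    simp only [Finset.mem_union, Finset.mem_map, addRightEmbedding_apply]
    rw [mem_support_iff, hcoeff]
    split_ifs with hj
    · rw [← mem_support_iff]
      refine ⟨fun h ↦ .inr ⟨_, h, Nat.sub_add_cancel hj⟩, ?_⟩
      rintro (h | ⟨i, hi, rfl⟩)
      · exact absurd (hlt h) hj.not_gt
      · rwa [Nat.add_sub_cancel]
    · rw [neg_ne_zero, ← mem_support_iff]
      refine ⟨.inl, ?_⟩
      rintro (h | ⟨i, -, rfl⟩)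
      · exact h
      · exact absurd (Nat.le_add_left n i) hj
  have hdisj : Disjoint a.support (a.support.map (addRightEmbedding n)) := by
    rw [Finset.disjoint_left]
    intro j hj hmem
    obtain ⟨i, -, rfl⟩ := Finset.mem_map.mp hmem
    exact (hlt hj).not_ge (Nat.le_add_left n i)
  rw [hunion, Finset.card_union_of_disjoint hdisj, Finset.card_map, two_mul]

end Support

section Parity

variable {R : Type*} [CommRing R]

/-- The part of `f` supported on the odd exponents, for coefficient rings of characteristic two:
there `X * f'` keeps the odd-degree terms of `f` and kills the others. -/
noncomputable def oddPart (f : R[X]) : R[X] := X * derivative f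

/-- The part of `f` supported on the even exponents, for coefficient rings of characteristic
two. -/
noncomputable def evenPart (f : R[X]) : R[X] := f - oddPart f

theorem dvd_oddPart_of_sq_dvd {p f : R[X]} (h : p ^ 2 ∣ f) : p ∣ oddPart f := by
  have hderiv : p ∣ derivative f := by
    simpa only [Nat.add_one_sub_one, pow_one] using pow_sub_one_dvd_derivative_of_pow_dvd h
  exact hderiv.mul_left X

theorem dvd_evenPart_of_sq_dvd {p f : R[X]} (h : p ^ 2 ∣ f) : p ∣ evenPart f :=
  dvd_sub ((dvd_pow_self p two_ne_zero).trans h) (dvd_oddPart_of_sq_dvd h)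

variable [CharP R 2] (f : R[X])

theorem coeff_oddPart (i : ℕ) : (oddPart f).coeff i = if Even i then 0 else f.coeff i := by
  cases i with
  | zero => simp [oddPart]
  | succ i =>
    rw [oddPart, coeff_X_mul, coeff_derivative, ← Nat.cast_succ, CharTwo.natCast_eq_ite]
    split_ifs <;> simp

theorem support_oddPart : (oddPart f).support = f.support.filter (¬ Even ·) := by
  ext i
  simp [coeff_oddPart, and_comm]

theorem support_evenPart : (evenPart f).support = f.support.filter Even := by
  ext i
  by_cases hi : Even i <;> simp [evenPart, coeff_oddPart, hi]

theorem card_support_evenPart_add_card_support_oddPart :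
    (evenPart f).support.card + (oddPart f).support.card = f.support.card := by
  rw [support_evenPart, support_oddPart]
  exact Finset.card_filter_add_card_filter_not _

end Parity

section BinaryRoots

variable {K : Type*} [Field K] [Algebra (ZMod 2) K] {c : (ZMod 2)[X]} {β : K}

theorem aeval_pow_prime {p : ℕ} [Fact p.Prime] {A : Type*} [CommSemiring A] [Algebra (ZMod p) A]
    (f : (ZMod p)[X]) (x : A) : aeval (x ^ p) f = aeval x f ^ p := by
  rw [← expand_aeval, ZMod.expand_card, map_pow]

theorem four_le_card_support_of_injOn (hc : c ≠ 0)
    (hinj : Set.InjOn (β ^ ·) (c.support : Set ℕ)) (h0 : aeval (1 : K) c = 0)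
    (h1 : aeval β c = 0) : 4 ≤ c.support.card := by
  refine lt_card_support_of_aeval_pow_eq_zero hc hinj (d := 3) fun j hj ↦ ?_
  interval_cases j
  · rwa [pow_zero]
  · rwa [pow_one]
  · rw [aeval_pow_prime, h1, zero_pow two_ne_zero]

theorem eight_le_card_support_of_injOn (hc : c ≠ 0)
    (hinj : Set.InjOn (β ^ ·) (c.support : Set ℕ)) (h0 : aeval (1 : K) c = 0)
    (h1 : aeval β c = 0) (h3 : aeval (β ^ 3) c = 0) (h5 : aeval (β ^ 5) c = 0) :
    8 ≤ c.support.card := by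
  have aeval_sq {x : K} (hx : aeval x c = 0) : aeval (x ^ 2) c = 0 := by
    rw [aeval_pow_prime, hx, zero_pow two_ne_zero]
  refine lt_card_support_of_aeval_pow_eq_zero hc hinj (d := 7) fun j hj ↦ ?_
  interval_cases j
  · rwa [pow_zero]
  · rwa [pow_one]
  · exact aeval_sq h1
  · exact h3
  · rw [show β ^ 4 = (β ^ 2) ^ 2 by rw [← pow_mul]]
    exact aeval_sq (aeval_sq h1)
  · exact h5
  · rw [show β ^ 6 = (β ^ 3) ^ 2 by rw [← pow_mul]]
    exact aeval_sq h3

end BinaryRoots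

theorem injOn_pow_of_modEq {M : Type*} [CommMonoid M] {β : M} {n k : ℕ}
    (hβ : IsPrimitiveRoot β n) (hn : n ≠ 0) (hkn : k.Coprime n) {s : Set ℕ}
    (hlt : ∀ i ∈ s, i < k * n) (hmod : ∀ i ∈ s, ∀ j ∈ s, i ≡ j [MOD k]) :
    s.InjOn (β ^ ·) := by
  intro i hi j hj hij
  have hmodn : i ≡ j [MOD n] :=
    hβ.eq_orderOf ▸ (hβ.isOfFinOrder hn).pow_eq_pow_iff_modEq.mp hij
  exact ((Nat.modEq_and_modEq_iff_modEq_mul hkn).mp ⟨hmod i hi j hj, hmodn⟩).eq_of_lt_of_lt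
    (hlt i hi) (hlt j hj)

section ParityInjOn

variable {R M : Type*} [CommRing R] [CharP R 2] [CommMonoid M] {β : M} {n : ℕ} {f : R[X]}

theorem injOn_pow_support_oddPart (hn : Odd n) (hβ : IsPrimitiveRoot β n)
    (hdeg : f.degree < (2 * n : ℕ)) : Set.InjOn (β ^ ·) ((oddPart f).support : Set ℕ) := by
  refine injOn_pow_of_modEq hβ hn.pos.ne' (Nat.coprime_two_left.mpr hn) ?_ ?_ <;>
    simp only [support_oddPart, Finset.mem_coe, Finset.mem_filter]
  · exact fun i hi ↦ Nat.cast_lt.mp ((le_degree_of_mem_supp i hi.1).trans_lt hdeg)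
  · grind [Nat.ModEq]

theorem injOn_pow_support_evenPart (hn : Odd n) (hβ : IsPrimitiveRoot β n)
    (hdeg : f.degree < (2 * n : ℕ)) : Set.InjOn (β ^ ·) ((evenPart f).support : Set ℕ) := by
  refine injOn_pow_of_modEq hβ hn.pos.ne' (Nat.coprime_two_left.mpr hn) ?_ ?_ <;>
    simp only [support_evenPart, Finset.mem_coe, Finset.mem_filter]
  · exact fun i hi ↦ Nat.cast_lt.mp ((le_degree_of_mem_supp i hi.1).trans_lt hdeg)
  · grind [Nat.ModEq]

end ParityInjOn

section Minpoly

variable {k K : Type*} [Field k] [Field K] [Algebra k K]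

theorem isCoprime_minpoly {x y : K} (hx : IsIntegral k x) (hy : IsIntegral k y)
    (hne : minpoly k x ≠ minpoly k y) : IsCoprime (minpoly k x) (minpoly k y) := by
  rw [(minpoly.irreducible hx).coprime_iff_not_dvd]
  intro hdvd
  exact hne (eq_of_monic_of_associated (minpoly.monic hx) (minpoly.monic hy)
    ((minpoly.irreducible hx).associated_of_dvd (minpoly.irreducible hy) hdvd))

theorem isCoprime_X_sub_one_minpoly {x : K} (hx : IsIntegral k x) (hne : x ≠ 1) :
    IsCoprime (X - 1) (minpoly k x) := by
  rw [← minpoly.one k K]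
  refine isCoprime_minpoly isIntegral_one hx fun h ↦ hne (sub_eq_zero.mp ?_)
  simpa only [← h, minpoly.one, map_sub, aeval_X, map_one] using minpoly.aeval k x

variable [Finite k]

theorem natDegree_minpoly_dvd_iff {x : K} {N : ℕ} (hx : IsPrimitiveRoot x N) (hN : 0 < N)
    (d : ℕ) : (minpoly k x).natDegree ∣ d ↔ N ∣ Nat.card k ^ d - 1 := by
  have hpow : x ^ Nat.card k ^ d = x * x ^ (Nat.card k ^ d - 1) := by
    rw [mul_pow_sub_one (pow_ne_zero d Nat.card_pos.ne')]
  rw [(minpoly.irreducible (hx.isIntegral hN).tower_top).natDegree_dvd_iff_dvd_X_pow_card_pow_sub_X,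
    minpoly.dvd_iff, map_sub, map_pow, aeval_X, sub_eq_zero, hpow,
    mul_eq_left₀ (hx.ne_zero hN.ne'), hx.pow_eq_one_iff_dvd]

theorem exists_eq_pow_card_pow_of_minpoly_eq {x y : K} (hx : IsIntegral k x)
    (hy : IsIntegral k y) (h : minpoly k x = minpoly k y) : ∃ i, y = x ^ Nat.card k ^ i := by
  let L := IntermediateField.adjoin k {x, y}
  have : FiniteDimensional k L := IntermediateField.finiteDimensional_adjoin <| by
    rintro z (rfl | rfl) <;> assumption
  have : Finite L := Module.finite_of_finite k
  let x' : L := ⟨x, IntermediateField.subset_adjoin k _ (by simp)⟩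
  let y' : L := ⟨y, IntermediateField.subset_adjoin k _ (by simp)⟩
  have h' : minpoly k y' = minpoly k x' := by
    rw [IntermediateField.minpoly_eq, IntermediateField.minpoly_eq]
    exact h.symm
  obtain ⟨σ, hσ⟩ := (Normal.minpoly_eq_iff_mem_orbit L).mp h'
  obtain ⟨p, _⟩ := CharP.exists k
  have : Fact p.Prime := ⟨CharP.char_is_prime k p⟩
  obtain ⟨i, hi⟩ := FiniteField.exists_forall_apply_eq_pow k p L σ
  exact ⟨i, congrArg Subtype.val (hσ.symm.trans (hi x'))⟩

end Minpoly

section Arithmetic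

theorem pow_sub_one_dvd_pow_sub_one_iff {a m k : ℕ} (ha : 1 < a) :
    a ^ m - 1 ∣ a ^ k - 1 ↔ m ∣ k := by
  have hpos (i : ℕ) : 1 ≤ a ^ i := Nat.one_le_pow _ _ (by omega)
  rw [← Nat.gcd_eq_left_iff_dvd, ← Nat.gcd_eq_left_iff_dvd, Nat.pow_sub_one_gcd_pow_sub_one,
    tsub_left_inj (hpos _) (hpos _), Nat.pow_right_inj ha]

theorem coprime_two_pow_sub_one {m k : ℕ} (h : Nat.Coprime m k) :
    Nat.Coprime (2 ^ m - 1) (2 ^ k - 1) := by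
  rw [Nat.Coprime, Nat.pow_sub_one_gcd_pow_sub_one, h.gcd_eq_one, pow_one, Nat.add_one_sub_one]

theorem three_mul_two_pow_sub_one_dvd_iff {m k : ℕ} (hm : Odd m) :
    3 * (2 ^ m - 1) ∣ 2 ^ k - 1 ↔ 2 * m ∣ k := by
  have h2m : Nat.Coprime 2 m := Nat.coprime_two_left.mpr hm
  rw [← h2m.lcm_eq_mul, Nat.lcm_dvd_iff, show 3 = 2 ^ 2 - 1 by rfl,
    ← (coprime_two_pow_sub_one h2m).lcm_eq_mul, Nat.lcm_dvd_iff,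
    pow_sub_one_dvd_pow_sub_one_iff one_lt_two, pow_sub_one_dvd_pow_sub_one_iff one_lt_two]

theorem coprime_five_three_mul_two_pow_sub_one {m : ℕ} (hm : Odd m) :
    Nat.Coprime 5 (3 * (2 ^ m - 1)) := by
  have h15 : Nat.Coprime (2 ^ 4 - 1) (2 ^ m - 1) :=
    coprime_two_pow_sub_one ((Nat.coprime_two_left.mpr hm).pow_left 2)
  exact Nat.Coprime.mul_right (by norm_num) (h15.coprime_dvd_left (by norm_num))

theorem not_five_modEq_two_pow {m : ℕ} (hm : 3 ≤ m) (i : ℕ) :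
    ¬ 5 ≡ 2 ^ i [MOD 2 ^ m - 1] := by
  intro h
  have hmod : 5 ≡ 2 ^ (i % m) [MOD 2 ^ m - 1] := by
    have hone : 2 ^ m ≡ 1 [MOD 2 ^ m - 1] := Nat.modEq_sub Nat.one_le_two_pow
    rw [← Nat.div_add_mod i m, pow_add, pow_mul] at h
    simpa only [one_pow, one_mul] using h.trans ((hone.pow (i / m)).mul_right (2 ^ (i % m)))
  have hlt : 2 ^ (i % m) < 2 ^ m - 1 := by
    have := Nat.pow_le_pow_right two_pos (Nat.le_sub_one_of_lt (Nat.mod_lt i (by omega : 0 < m)))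
    have := Nat.two_pow_pred_add_two_pow_pred (by omega : 0 < m)
    have := Nat.pow_le_pow_right two_pos (by omega : 2 ≤ m - 1)
    omega
  have hm8 := Nat.pow_le_pow_right two_pos hm
  have heq : 5 = 2 ^ (i % m) := hmod.eq_of_lt_of_lt (by omega) hlt
  have hdvd : 5 ∣ 2 ^ (i % m) := heq ▸ dvd_rfl
  exact absurd (Nat.Prime.dvd_of_dvd_pow (by norm_num) hdvd) (by norm_num)

end Arithmetic

section PrimitiveRoot

variable {K : Type*} [Field K]

theorem natDegree_minpoly_of_isPrimitiveRoot_card_pow_sub_one {k : Type*} [Field k] [Finite k]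
    [Algebra k K] {m : ℕ} (hm : m ≠ 0) {θ : K} (hθ : IsPrimitiveRoot θ (Nat.card k ^ m - 1)) :
    (minpoly k θ).natDegree = m := by
  have hk : 1 < Nat.card k := Finite.one_lt_card
  refine Nat.dvd_right_iff_eq.mp fun d ↦ ?_
  rw [natDegree_minpoly_dvd_iff hθ (Nat.sub_pos_of_lt (Nat.one_lt_pow hm hk)),
    pow_sub_one_dvd_pow_sub_one_iff hk]

theorem exists_pow_eq_one_add_self_add_sq [CharP K 2] {m : ℕ} (hm : 3 ≤ m) {θ : K}
    (hθ : IsPrimitiveRoot θ (2 ^ m - 1)) : ∃ k, 2 < k ∧ k < 2 ^ m - 1 ∧ θ ^ k = 1 + θ + θ ^ 2 := by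
  have hm8 := Nat.pow_le_pow_right two_pos hm
  have : NeZero (2 ^ m - 1) := ⟨by omega⟩
  have hθ0 : θ ≠ 0 := hθ.ne_zero NeZero.out
  have hθ1 : θ + 1 ≠ 0 := fun h ↦ hθ.ne_one (by omega) (CharTwo.add_eq_zero.mp h)
  have hne : 1 + θ + θ ^ 2 ≠ 0 := fun h ↦
    hθ.pow_ne_one_of_pos_of_lt three_ne_zero (by omega) (by linear_combination (θ - 1) * h)
  have hfrob : (1 + θ + θ ^ 2) ^ 2 ^ m = 1 + θ + θ ^ 2 := by
    have hθfrob : θ ^ 2 ^ m = θ := by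
      rw [← Nat.sub_add_cancel (Nat.one_le_two_pow (n := m)), pow_succ, hθ.pow_eq_one, one_mul]
    rw [add_pow_char_pow, add_pow_char_pow, one_pow, pow_right_comm, hθfrob]
  have hpow : (1 + θ + θ ^ 2) ^ (2 ^ m - 1) = 1 := by
    rw [← mul_eq_left₀ hne, mul_pow_sub_one (by omega), hfrob]
  -- The `(2 ^ m - 1)`-th roots of unity are the nonzero elements of `𝔽_{2^m}`.
  obtain ⟨k, hk, hkθ⟩ := hθ.eq_pow_of_pow_eq_one hpow
  refine ⟨k, ?_, hk, hkθ⟩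
  by_contra! hk2
  have h2 : (2 : K) = 0 := CharTwo.two_eq_zero
  interval_cases k
  · exact mul_ne_zero hθ0 hθ1 (by linear_combination -hkθ)
  · exact pow_ne_zero 2 hθ1 (by linear_combination -hkθ + θ * h2)
  · exact hθ1 (by linear_combination -hkθ)

theorem exists_card_support_eq_four [Algebra (ZMod 2) K] {m : ℕ} (hm : 3 ≤ m) {θ : K}
    (hθ : IsPrimitiveRoot θ (2 ^ m - 1)) :
    ∃ b : (ZMod 2)[X], b.natDegree < 2 ^ m - 1 ∧ b.support.card = 4 ∧ aeval (1 : K) b = 0 ∧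
      aeval θ b = 0 := by
  have : CharP K 2 := charP_of_injective_algebraMap' (ZMod 2) 2
  obtain ⟨k, hk2, hkm, hkθ⟩ := exists_pow_eq_one_add_self_add_sq hm hθ
  have h2 : (2 : K) = 0 := CharTwo.two_eq_zero
  let s : Finset ℕ := {0, 1, 2, k}
  have hs : s.card = 4 := by
    simp only [s]
    grind
  have haeval (x : K) : aeval x (∑ i ∈ s, X ^ i : (ZMod 2)[X]) = 1 + x + x ^ 2 + x ^ k := by
    simp only [map_sum, map_pow, aeval_X, s]
    rw [Finset.sum_insert (by grind), Finset.sum_insert (by grind), Finset.sum_pair hk2.ne]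
    ring
  refine ⟨∑ i ∈ s, X ^ i, ?_, ?_, ?_, ?_⟩
  · refine (natDegree_le_iff_coeff_eq_zero.mpr fun j hj ↦ ?_).trans_lt hkm
    rw [← notMem_support_iff, support_sum_X_pow]
    grind
  · rw [support_sum_X_pow, hs]
  · rw [haeval, one_pow, one_pow]
    linear_combination 2 * h2
  · rw [haeval, hkθ]
    linear_combination (1 + θ + θ ^ 2) * h2

end PrimitiveRoot

section Generator

variable {K : Type*} [Field K] [Algebra (ZMod 2) K]

variable {m : ℕ} {β : K}

theorem natDegree_minpoly_of_isPrimitiveRoot_three_mul (hmo : Odd m)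
    (hβ : IsPrimitiveRoot β (3 * (2 ^ m - 1))) : (minpoly (ZMod 2) β).natDegree = 2 * m := by
  have hpos : 0 < 3 * (2 ^ m - 1) :=
    Nat.mul_pos three_pos (Nat.sub_pos_of_lt (Nat.one_lt_two_pow hmo.pos.ne'))
  refine Nat.dvd_right_iff_eq.mp fun d ↦ ?_
  rw [natDegree_minpoly_dvd_iff hβ hpos, Nat.card_zmod, three_mul_two_pow_sub_one_dvd_iff hmo]

theorem natDegree_minpoly_pow_three (hm : m ≠ 0)
    (hβ : IsPrimitiveRoot β (3 * (2 ^ m - 1))) : (minpoly (ZMod 2) (β ^ 3)).natDegree = m := by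
  have hpos : 0 < 3 * (2 ^ m - 1) :=
    Nat.mul_pos three_pos (Nat.sub_pos_of_lt (Nat.one_lt_two_pow hm))
  refine natDegree_minpoly_of_isPrimitiveRoot_card_pow_sub_one hm ?_
  rw [Nat.card_zmod]
  exact hβ.pow hpos rfl

theorem minpoly_ne_minpoly_pow_five (hm : 3 ≤ m) (hβ : IsPrimitiveRoot β (3 * (2 ^ m - 1))) :
    minpoly (ZMod 2) β ≠ minpoly (ZMod 2) (β ^ 5) := by
  intro h
  have hm8 := Nat.pow_le_pow_right two_pos hm
  have hint : IsIntegral (ZMod 2) β := (hβ.isIntegral (by omega)).tower_top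
  obtain ⟨i, hi⟩ := exists_eq_pow_card_pow_of_minpoly_eq hint (hint.pow 5) h
  rw [Nat.card_zmod] at hi
  have hmod : 5 ≡ 2 ^ i [MOD 3 * (2 ^ m - 1)] :=
    hβ.eq_orderOf ▸ (hβ.isOfFinOrder (by omega)).pow_eq_pow_iff_modEq.mp hi
  exact not_five_modEq_two_pow hm i (hmod.of_dvd (dvd_mul_left _ 3))

theorem mul_minpoly_dvd_X_pow_sub_one (hm : 3 ≤ m) (hmo : Odd m)
    (hβ : IsPrimitiveRoot β (3 * (2 ^ m - 1))) :
    (X - 1) * minpoly (ZMod 2) β * minpoly (ZMod 2) (β ^ 3) * minpoly (ZMod 2) (β ^ 5) ∣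
      X ^ (3 * (2 ^ m - 1)) - 1 := by
  have hm8 := Nat.pow_le_pow_right two_pos hm
  have hint : IsIntegral (ZMod 2) β := (hβ.isIntegral (by omega)).tower_top
  have hβ5 := hβ.pow_of_coprime 5 (coprime_five_three_mul_two_pow_sub_one hmo)
  have hdeg1 := natDegree_minpoly_of_isPrimitiveRoot_three_mul hmo hβ
  have hdeg3 := natDegree_minpoly_pow_three (by omega) hβ
  have hdeg5 := natDegree_minpoly_of_isPrimitiveRoot_three_mul hmo hβ5
  have pow_ne_one {i : ℕ} (h0 : i ≠ 0) (hi : i < 3 * (2 ^ m - 1)) : β ^ i ≠ 1 :=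
    hβ.pow_ne_one_of_pos_of_lt h0 hi
  have h01 := isCoprime_X_sub_one_minpoly hint (hβ.ne_one (by omega))
  have h03 := isCoprime_X_sub_one_minpoly (hint.pow 3) (pow_ne_one three_ne_zero (by omega))
  have h05 := isCoprime_X_sub_one_minpoly (hint.pow 5) (hβ5.ne_one (by omega))
  have h13 : IsCoprime (minpoly (ZMod 2) β) (minpoly (ZMod 2) (β ^ 3)) :=
    isCoprime_minpoly hint (hint.pow 3) (ne_of_apply_ne natDegree (by omega))
  have h15 := isCoprime_minpoly hint (hint.pow 5) (minpoly_ne_minpoly_pow_five hm hβ)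
  have h35 : IsCoprime (minpoly (ZMod 2) (β ^ 3)) (minpoly (ZMod 2) (β ^ 5)) :=
    isCoprime_minpoly (hint.pow 3) (hint.pow 5) (ne_of_apply_ne natDegree (by omega))
  have hX : (X - 1 : (ZMod 2)[X]) ∣ X ^ (3 * (2 ^ m - 1)) - 1 := sub_one_dvd_pow_sub_one X _
  have minpoly_dvd (i : ℕ) : minpoly (ZMod 2) (β ^ i) ∣ X ^ (3 * (2 ^ m - 1)) - 1 :=
    minpoly.dvd _ _ (by simp [pow_right_comm β i, hβ.pow_eq_one])
  exact ((h05.mul_left h15).mul_left h35).mul_dvd ((h03.mul_left h13).mul_dvd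
    (h01.mul_dvd hX (pow_one β ▸ minpoly_dvd 1)) (minpoly_dvd 3)) (minpoly_dvd 5)

/-- The generator polynomial `(x - 1)² m_β(x)² m_{β³}(x) m_{β⁵}(x)` over `𝔽₂`. -/
noncomputable def repeatedRootGenerator (β : K) : (ZMod 2)[X] :=
  (X - 1) ^ 2 * (minpoly (ZMod 2) β) ^ 2 * minpoly (ZMod 2) (β ^ 3) * minpoly (ZMod 2) (β ^ 5)

theorem natDegree_repeatedRootGenerator (hmo : Odd m) (hβ : IsPrimitiveRoot β (3 * (2 ^ m - 1))) :
    (repeatedRootGenerator β).natDegree = 7 * m + 2 := by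
  have hX : (X - 1 : (ZMod 2)[X]).natDegree = 1 := natDegree_X_sub_C 1
  have hβ5 := hβ.pow_of_coprime 5 (coprime_five_three_mul_two_pow_sub_one hmo)
  have hm1 : 1 < 2 ^ m := Nat.one_lt_two_pow hmo.pos.ne'
  have hint : IsIntegral (ZMod 2) β := (hβ.isIntegral (by omega)).tower_top
  have hX' : (X - 1 : (ZMod 2)[X]).Monic := monic_X_sub_C 1
  have h1 := minpoly.monic hint
  have h3 := minpoly.monic (hint.pow 3)
  have h5 := minpoly.monic (hint.pow 5)
  rw [repeatedRootGenerator, (((hX'.pow 2).mul (h1.pow 2)).mul h3).natDegree_mul h5,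
    ((hX'.pow 2).mul (h1.pow 2)).natDegree_mul h3, (hX'.pow 2).natDegree_mul (h1.pow 2),
    hX'.natDegree_pow, h1.natDegree_pow, hX,
    natDegree_minpoly_of_isPrimitiveRoot_three_mul hmo hβ,
    natDegree_minpoly_pow_three hmo.pos.ne' hβ,
    natDegree_minpoly_of_isPrimitiveRoot_three_mul hmo hβ5]
  omega

theorem repeatedRootGenerator_dvd_mul_X_pow_sub_one (hm : 3 ≤ m) (hmo : Odd m)
    (hβ : IsPrimitiveRoot β (3 * (2 ^ m - 1))) {a : (ZMod 2)[X]}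
    (ha : (X - 1) * minpoly (ZMod 2) β ∣ a) :
    repeatedRootGenerator β ∣ a * (X ^ (3 * (2 ^ m - 1)) - 1) := by
  refine dvd_trans (dvd_of_eq ?_) (mul_dvd_mul ha (mul_minpoly_dvd_X_pow_sub_one hm hmo hβ))
  rw [repeatedRootGenerator]
  ring

theorem repeatedRootGenerator_dvd_X_pow_sub_one (hm : 3 ≤ m) (hmo : Odd m)
    (hβ : IsPrimitiveRoot β (3 * (2 ^ m - 1))) :
    repeatedRootGenerator β ∣ X ^ (2 * (3 * (2 ^ m - 1))) - 1 := by
  have hsq : (X ^ (2 * (3 * (2 ^ m - 1))) - 1 : (ZMod 2)[X]) =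
      (X ^ (3 * (2 ^ m - 1)) - 1) * (X ^ (3 * (2 ^ m - 1)) - 1) := by
    rw [← sq, sub_pow_char, one_pow, ← pow_mul']
  rw [hsq]
  exact repeatedRootGenerator_dvd_mul_X_pow_sub_one hm hmo hβ
    (dvd_of_mul_right_dvd (dvd_of_mul_right_dvd (mul_minpoly_dvd_X_pow_sub_one hm hmo hβ)))

theorem eight_le_card_support {n : ℕ} (hn : Odd n) (hβ : IsPrimitiveRoot β n)
    {c : (ZMod 2)[X]} (hc : c ≠ 0) (hdeg : c.degree < (2 * n : ℕ))
    (hg : repeatedRootGenerator β ∣ c) : 8 ≤ c.support.card := by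
  have hsq : ((X - 1) * minpoly (ZMod 2) β) ^ 2 ∣ c := by
    refine dvd_trans ?_ hg
    rw [repeatedRootGenerator, mul_pow, mul_assoc ((X - 1) ^ 2 * _)]
    exact dvd_mul_right _ _
  have h3 : aeval (β ^ 3) c = 0 := aeval_eq_zero_of_dvd_aeval_eq_zero hg <| by
    simp [repeatedRootGenerator]
  have h5 : aeval (β ^ 5) c = 0 := aeval_eq_zero_of_dvd_aeval_eq_zero hg <| by
    simp [repeatedRootGenerator]
  have roots {f : (ZMod 2)[X]} (hf : (X - 1) * minpoly (ZMod 2) β ∣ f) :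
      aeval (1 : K) f = 0 ∧ aeval β f = 0 :=
    ⟨aeval_eq_zero_of_dvd_aeval_eq_zero hf (by simp),
      aeval_eq_zero_of_dvd_aeval_eq_zero hf (by simp)⟩
  obtain ⟨hodd0, hodd1⟩ := roots (dvd_oddPart_of_sq_dvd hsq)
  obtain ⟨heven0, heven1⟩ := roots (dvd_evenPart_of_sq_dvd hsq)
  have hoddInj := injOn_pow_support_oddPart hn hβ hdeg
  have hevenInj := injOn_pow_support_evenPart hn hβ hdeg
  by_cases hodd : oddPart c = 0
  · have hceven : evenPart c = c := by rw [evenPart, hodd, sub_zero]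
    rw [hceven] at hevenInj heven0 heven1
    exact eight_le_card_support_of_injOn hc hevenInj heven0 heven1 h3 h5
  by_cases heven : evenPart c = 0
  · have hcodd : oddPart c = c := (sub_eq_zero.mp heven).symm
    rw [hcodd] at hoddInj hodd0 hodd1
    exact eight_le_card_support_of_injOn hc hoddInj hodd0 hodd1 h3 h5
  have := four_le_card_support_of_injOn hodd hoddInj hodd0 hodd1
  have := four_le_card_support_of_injOn heven hevenInj heven0 heven1
  have := card_support_evenPart_add_card_support_oddPart c
  omega

theorem exists_card_support_eq_eight (hm : 3 ≤ m) (hmo : Odd m)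
    (hβ : IsPrimitiveRoot β (3 * (2 ^ m - 1))) :
    ∃ c : (ZMod 2)[X], c.degree < (2 * (3 * (2 ^ m - 1)) : ℕ) ∧ repeatedRootGenerator β ∣ c ∧
      c.support.card = 8 := by
  have hm8 := Nat.pow_le_pow_right two_pos hm
  obtain ⟨b, hbdeg, hbcard, hb1, hbθ⟩ :=
    exists_card_support_eq_four hm (hβ.pow (by omega) rfl : IsPrimitiveRoot (β ^ 3) (2 ^ m - 1))
  let a := expand (ZMod 2) 3 b
  have hadeg : a.natDegree < 3 * (2 ^ m - 1) := by
    rw [natDegree_expand]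
    omega
  have hcop := isCoprime_X_sub_one_minpoly (k := ZMod 2)
    (hβ.isIntegral (by omega)).tower_top (hβ.ne_one (by omega))
  have ha : (X - 1) * minpoly (ZMod 2) β ∣ a := by
    refine hcop.mul_dvd ?_ (minpoly.dvd _ _ ?_)
    · rw [← minpoly.one (ZMod 2) K]
      exact minpoly.dvd _ _ (by rw [expand_aeval, one_pow, hb1])
    · rw [expand_aeval, hbθ]
  refine ⟨a * (X ^ (3 * (2 ^ m - 1)) - 1), ?_,
    repeatedRootGenerator_dvd_mul_X_pow_sub_one hm hmo hβ ha, ?_⟩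
  · have hX : (X ^ (3 * (2 ^ m - 1)) - 1 : (ZMod 2)[X]).natDegree = 3 * (2 ^ m - 1) :=
      natDegree_X_pow_sub_C
    have := natDegree_mul_le (p := a) (q := X ^ (3 * (2 ^ m - 1)) - 1)
    exact degree_le_natDegree.trans_lt (Nat.cast_lt.mpr (by omega))
  · rw [card_support_mul_X_pow_sub_one hadeg, card_support_expand three_pos, hbcard]

end Generator

theorem statement13_general {K : Type*} [Field K] [Algebra (ZMod 2) K] {m : ℕ} (hm : 3 ≤ m)
    (hmo : Odd m) {n : ℕ} (hn : n = 3 * (2 ^ m - 1)) {β : K} (hβ : IsPrimitiveRoot β n) :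
    Module.finrank (ZMod 2)
        (cyclicCode (ZMod 2) (2 * n)
          ((X - 1) ^ 2 * (minpoly (ZMod 2) β) ^ 2 * minpoly (ZMod 2) (β ^ 3) *
            minpoly (ZMod 2) (β ^ 5))) =
      6 * (2 ^ m - 1) - 7 * m - 2 ∧
    minDist (cyclicCode (ZMod 2) (2 * n)
        ((X - 1) ^ 2 * (minpoly (ZMod 2) β) ^ 2 * minpoly (ZMod 2) (β ^ 3) *
          minpoly (ZMod 2) (β ^ 5))) = 8 := by
  subst hn
  rw [← repeatedRootGenerator]
  have hdvd := repeatedRootGenerator_dvd_X_pow_sub_one hm hmo hβ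
  have hdeg := natDegree_repeatedRootGenerator hmo hβ
  have hne : repeatedRootGenerator β ≠ 0 := ne_zero_of_natDegree_gt (n := 0) (by omega)
  have hnodd : Odd (3 * (2 ^ m - 1)) := by
    have heven : Even (2 ^ m) := (Nat.even_pow' hmo.pos.ne').mpr even_two
    exact Nat.odd_mul.mpr ⟨by decide, Nat.Even.sub_odd Nat.one_le_two_pow heven odd_one⟩
  constructor
  · rw [finrank_cyclicCode hdvd hne, hdeg]
    omega
  · refine IsLeast.csInf_eq ⟨?_, ?_⟩
    · obtain ⟨c, hcdeg, hgc, hcard⟩ := exists_card_support_eq_eight hm hmo hβ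
      have hc : c ≠ 0 := by rintro rfl; simp at hcard
      exact ⟨c, (mem_cyclicCode_iff hdvd).mpr ⟨hcdeg, hgc⟩, hc, hcard⟩
    · rintro w ⟨c, hcmem, hc, rfl⟩
      obtain ⟨hcdeg, hgc⟩ := (mem_cyclicCode_iff hdvd).mp hcmem
      exact eight_le_card_support hnodd hβ hc hcdeg hgc

/-- for odd `m ≥ 5`, `n = 3(2^m - 1)` and `β` a primitive `n`-th root of
unity in `F_{2^{2m}}`, the repeated-root binary cyclic code of length `2n` with generator
polynomial `(x-1)^2 m_β(x)^2 m_{β³}(x) m_{β⁵}(x)` has dimension `6(2^m - 1) - 7m - 2`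
and minimum distance exactly `8`. -/
theorem statement13 {K : Type*} [Field K] [Fintype K] [Algebra (ZMod 2) K]
    (m : ℕ) (hm : 5 ≤ m) (hmo : Odd m) (hK : Fintype.card K = 2 ^ (2 * m))
    (n : ℕ) (hn : n = 3 * (2 ^ m - 1))
    (β : K) (hβ : IsPrimitiveRoot β n) :
    Module.finrank (ZMod 2)
        (cyclicCode (ZMod 2) (2 * n)
          ((X - 1) ^ 2 * (minpoly (ZMod 2) β) ^ 2 * minpoly (ZMod 2) (β ^ 3) *
            minpoly (ZMod 2) (β ^ 5))) =
      6 * (2 ^ m - 1) - 7 * m - 2 ∧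
    minDist (cyclicCode (ZMod 2) (2 * n)
        ((X - 1) ^ 2 * (minpoly (ZMod 2) β) ^ 2 * minpoly (ZMod 2) (β ^ 3) *
          minpoly (ZMod 2) (β ^ 5))) = 8 := by
  exact statement13_general (by omega) hmo hn hβ
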